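/- Suppose E[V(y Z)] < ∞ for every y > 0, where V is the convex conjugate of the utility function U. Then the dual value function v(y) := E[V(y Z)] satisfies v(y) = sup_{x>0} { u(x, U) − x y } for every y > 0; i.e. v is the conjugate of the primal value function u(·, U). -/

import Mathlib

/-!
The inequality `≥` is the Fenchel inequality `U(f) ≤ V(yZ) + yZf`, integrated over `Ω`
(`Uext_le`, `eexp_le_of_le`).

For `≤`, a maximiser of `x ↦ U(x) - x y Z(ω)` need not be chosen: since `U` is nondecreasing, the
supremum defining `V` may be taken over a countable dense set, so an `ε`-maximiser `f` can be
selected measurably as the first good point of an enumeration (`exists_measurable_near_max`).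
Its cost `E[Zf]` is finite because the Fenchel inequality at `yZ/2` gives
`yZf/2 ≤ V(yZ/2) - V(yZ) + ε`, and `V(yZ/2)` is integrable by assumption. With `x = E[Zf]` one gets
`u(x) - xy ≥ E[U(f) - yZf] ≥ v(y) - ε`.
-/

open MeasureTheory Filter Set Topology ENNReal

noncomputable section

/-- The utility function extended to all of `ℝ`, with value `−∞` on `(−∞,0)` and
`U(0) := lim_{x ↓ 0} U(x)` (here, by monotonicity, the infimum over `(0,∞)`). -/
def Uext (U : ℝ → ℝ) : ℝ → EReal := fun x =>
  if 0 < x then (U x : EReal)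
  else if x = 0 then ⨅ z : {z : ℝ // 0 < z}, ((U z.1 : ℝ) : EReal)
  else ⊥

/-- A (possibly non-concave) utility function. -/
structure IsUtility (U : ℝ → ℝ) : Prop where
  mono : ∀ ⦃x y : ℝ⦄, 0 < x → x ≤ y → U x ≤ U y
  nonconst : ∃ x y : ℝ, 0 < x ∧ 0 < y ∧ U x ≠ U y
  usc : UpperSemicontinuousOn U (Set.Ioi 0)
  growth : Filter.Tendsto (fun x => U x / x) Filter.atTop (nhds 0)
  pos_limit : ∃ x : ℝ, 0 < x ∧ 0 < U x

/-- Concavity for `EReal`-valued functions on `ℝ`. -/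
def ERealConcave (g : ℝ → EReal) : Prop :=
  ∀ x y : ℝ, ∀ t : ℝ, 0 ≤ t → t ≤ 1 →
    ((t : ℝ) : EReal) * g x + (((1 - t) : ℝ) : EReal) * g y ≤ g (t * x + (1 - t) * y)

/-- `Uc` is the concave envelope of the utility `U`: the smallest concave function
dominating (the extension of) `U`. -/
def IsConcaveEnvelope (U : ℝ → ℝ) (Uc : ℝ → EReal) : Prop :=
  ERealConcave Uc ∧ (∀ x : ℝ, Uext U x ≤ Uc x) ∧
    ∀ g : ℝ → EReal, ERealConcave g → (∀ x : ℝ, Uext U x ≤ g x) → ∀ x : ℝ, Uc x ≤ g x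

/-- The convex conjugate `V(y) = sup_{x > 0} (U(x) − x y)`. -/
def conj (U : ℝ → ℝ) (y : ℝ) : ℝ :=
  sSup ((fun x => U x - x * y) '' Set.Ioi (0 : ℝ))

/-- The subdifferential of a convex function `V` (viewed on `(0,∞)`). -/
def subdiff (V : ℝ → ℝ) (y : ℝ) : Set ℝ :=
  {q : ℝ | ∀ z : ℝ, 0 < z → V y + q * (z - y) ≤ V z}

/-- The extended asymptotic elasticity `EAE(V) = limsup_{y ↓ 0} sup_{q ∈ ∂V(y)} |q| y / V(y)`. -/
def EAE (V : ℝ → ℝ) : EReal :=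
  Filter.limsup (fun y : ℝ => ⨆ q ∈ subdiff V y, (((|q| * y / V y) : ℝ) : EReal))
    (nhdsWithin (0 : ℝ) (Set.Ioi 0))

/-- The positive part of an extended real number, as an element of `ℝ≥0∞`. -/
def erealPos (a : EReal) : ℝ≥0∞ := if a = ⊤ then ⊤ else ENNReal.ofReal a.toReal

/-- The expectation of an `EReal`-valued function: `E[g] = E[g⁺] − E[g⁻]`, with the
convention `E[g] = −∞` whenever the negative part `g⁻` is not integrable. -/
def eexp {Ω : Type*} [MeasurableSpace Ω] (μ : Measure Ω) (g : Ω → EReal) : EReal :=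
  if (∫⁻ ω, erealPos (-(g ω)) ∂μ) < ⊤ then
    ((∫⁻ ω, erealPos (g ω) ∂μ : ℝ≥0∞) : EReal) - (((∫⁻ ω, erealPos (-(g ω)) ∂μ).toReal : ℝ) : EReal)
  else ⊥

/-- The set `C(x)` of attainable terminal liquidation values: nonnegative measurable `f`
with `E[Z f] ≤ x`. -/
def Cset {Ω : Type*} [MeasurableSpace Ω] (μ : Measure Ω) (Z : Ω → ℝ) (x : ℝ) :
    Set (Ω → ℝ) :=
  {f | Measurable f ∧ (∀ ω, 0 ≤ f ω) ∧
    (∫⁻ ω, ENNReal.ofReal (Z ω * f ω) ∂μ) ≤ ENNReal.ofReal x}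

/-- The value function `u(x, W) = sup {E[W(f)] : f ∈ C(x)}`. -/
def valueFn {Ω : Type*} [MeasurableSpace Ω] (μ : Measure Ω) (Z : Ω → ℝ)
    (W : ℝ → EReal) (x : ℝ) : EReal :=
  ⨆ f ∈ Cset μ Z x, eexp μ (fun ω => W (f ω))

end

/-! ### Expectations of extended-real-valued functions -/

section Expectation

variable {Ω : Type*} [MeasurableSpace Ω] {μ : MeasureTheory.Measure Ω}

lemma erealPos_coe (a : ℝ) : erealPos (a : EReal) = ENNReal.ofReal a := by
  simp [erealPos]

lemma erealPos_neg_coe (a : ℝ) : erealPos (-(a : EReal)) = ENNReal.ofReal (-a) := by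
  rw [← EReal.coe_neg, erealPos_coe]

lemma eexp_coe {g : Ω → ℝ} (hg : Integrable g μ) :
    eexp μ (fun ω => (g ω : EReal)) = ((∫ ω, g ω ∂μ : ℝ) : EReal) := by
  have h1 := hg.lintegral_lt_top
  have h2 := hg.neg.lintegral_lt_top
  simp only [Pi.neg_apply] at h2
  rw [integral_eq_lintegral_pos_part_sub_lintegral_neg_part hg]
  simp only [eexp, erealPos_coe, erealPos_neg_coe, if_pos h2]
  generalize (∫⁻ ω, ENNReal.ofReal (g ω) ∂μ) = a at *
  lift a to NNReal using h1.ne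
  rfl

/-- Monotonicity of the expectation below an integrable function. No measurability of `h` is
needed: the comparison `h⁺ + g⁻ ≤ g⁺ + h⁻` involves sums in which one summand is measurable. -/
lemma eexp_le_of_le {h : Ω → EReal} {g : Ω → ℝ} (hg : Integrable g μ)
    (hle : ∀ ω, h ω ≤ (g ω : EReal)) : eexp μ h ≤ ((∫ ω, g ω ∂μ : ℝ) : EReal) := by
  unfold eexp
  split_ifs with hn
  swap
  · exact bot_le
  have h1 := hg.lintegral_lt_top
  have h2 := hg.neg.lintegral_lt_top
  simp only [Pi.neg_apply] at h2
  have hpt : ∀ ω, erealPos (h ω) + ENNReal.ofReal (-(g ω))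
      ≤ ENNReal.ofReal (g ω) + erealPos (-(h ω)) := by
    intro ω
    have := hle ω
    generalize h ω = a at *
    induction a using EReal.rec with
    | bot => simp [erealPos]
    | top => simp at this
    | coe a =>
      rw [EReal.coe_le_coe_iff] at this
      rw [erealPos_coe, erealPos_neg_coe]
      rcases le_total 0 a with ha | ha <;> rcases le_total 0 (g ω) with hb | hb
      · rw [ENNReal.ofReal_of_nonpos (p := -g ω) (by linarith),
          ENNReal.ofReal_of_nonpos (p := -a) (by linarith)]
        simpa using ENNReal.ofReal_le_ofReal this
      · have e1 : a = 0 := by linarith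
        have e2 : g ω = 0 := by linarith
        simp [e1, e2]
      · rw [ENNReal.ofReal_of_nonpos (p := -g ω) (by linarith), ENNReal.ofReal_of_nonpos ha]
        simp
      · rw [ENNReal.ofReal_of_nonpos ha, ENNReal.ofReal_of_nonpos hb]
        simpa using ENNReal.ofReal_le_ofReal (by linarith : -g ω ≤ -a)
  have hm : AEMeasurable (fun ω => ENNReal.ofReal (-(g ω))) μ :=
    hg.aemeasurable.neg.ennreal_ofReal
  have hint : (∫⁻ ω, erealPos (h ω) ∂μ) + ∫⁻ ω, ENNReal.ofReal (-(g ω)) ∂μ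
      ≤ (∫⁻ ω, ENNReal.ofReal (g ω) ∂μ) + ∫⁻ ω, erealPos (-(h ω)) ∂μ := by
    rw [← lintegral_add_right' _ hm,
      ← lintegral_add_left' hg.aemeasurable.ennreal_ofReal]
    exact lintegral_mono hpt
  have h3 : (∫⁻ ω, erealPos (h ω) ∂μ) < ⊤ :=
    lt_of_le_of_lt (le_self_add.trans hint) (ENNReal.add_lt_top.2 ⟨h1, hn⟩)
  rw [integral_eq_lintegral_pos_part_sub_lintegral_neg_part hg]
  generalize (∫⁻ ω, erealPos (h ω) ∂μ) = a at *
  generalize (∫⁻ ω, erealPos (-(h ω)) ∂μ) = b at *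
  generalize (∫⁻ ω, ENNReal.ofReal (g ω) ∂μ) = c at *
  generalize (∫⁻ ω, ENNReal.ofReal (-(g ω)) ∂μ) = d at *
  lift a to NNReal using h3.ne
  lift b to NNReal using hn.ne
  lift c to NNReal using h1.ne
  lift d to NNReal using h2.ne
  have hr : (a : ℝ) + d ≤ c + b := by exact_mod_cast hint
  change ((a : ℝ) : EReal) - ((b : ℝ) : EReal) ≤ (((c : ℝ) - (d : ℝ) : ℝ) : EReal)
  rw [← EReal.coe_sub, EReal.coe_le_coe_iff]
  linarith

/-- A function with an integrable minorant and `eexp < ⊤` is integrable. -/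
lemma integrable_of_eexp_lt_top {g l : Ω → ℝ} (hgm : Measurable g) (hl : Integrable l μ)
    (hle : ∀ ω, l ω ≤ g ω) (hlt : eexp μ (fun ω => (g ω : EReal)) < ⊤) : Integrable g μ := by
  have hneg : (∫⁻ ω, ENNReal.ofReal (-(g ω)) ∂μ) < ⊤ := by
    have h2 := hl.neg.lintegral_lt_top
    refine lt_of_le_of_lt (lintegral_mono fun ω => ENNReal.ofReal_le_ofReal ?_) h2
    exact neg_le_neg (hle ω)
  have hpos : (∫⁻ ω, ENNReal.ofReal (g ω) ∂μ) < ⊤ := by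
    simp only [eexp, erealPos_coe, erealPos_neg_coe, if_pos hneg] at hlt
    by_contra hcon
    rw [not_lt, top_le_iff] at hcon
    rw [hcon] at hlt
    simp at hlt
  refine ⟨hgm.aestronglyMeasurable, ?_⟩
  rw [hasFiniteIntegral_iff_norm]
  have : ∀ ω, ENNReal.ofReal ‖g ω‖ = ENNReal.ofReal (g ω) + ENNReal.ofReal (-(g ω)) := by
    intro ω
    rcases le_total 0 (g ω) with h | h
    · rw [Real.norm_of_nonneg h, ENNReal.ofReal_of_nonpos (p := -g ω) (by linarith), add_zero]
    · rw [Real.norm_of_nonpos h, ENNReal.ofReal_of_nonpos h, zero_add]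
  simp_rw [this]
  rw [lintegral_add_left hgm.ennreal_ofReal]
  exact ENNReal.add_lt_top.2 ⟨hpos, hneg⟩

end Expectation

/-! ### The Fenchel inequality and near-maximisers -/

section Conjugate

variable {U : ℝ → ℝ}

/-- The supremum defining `V(y)` is finite for `y > 0`, by monotonicity and sublinear growth. -/
lemma conj_bddAbove (hU : IsUtility U) {y : ℝ} (hy : 0 < y) :
    BddAbove ((fun x => U x - x * y) '' Set.Ioi (0 : ℝ)) := by
  obtain ⟨X, hX, hX0⟩ := ((hU.growth.eventually (gt_mem_nhds hy)).and
    (eventually_gt_atTop 0)).exists_forall_of_atTop.imp fun X h =>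
      (⟨fun x hx => (h x hx).1, (h X le_rfl).2⟩ : (∀ x, X ≤ x → U x / x < y) ∧ 0 < X)
  refine ⟨max 0 (U X), ?_⟩
  rintro _ ⟨x, hx, rfl⟩
  have hx : 0 < x := hx
  rcases le_total X x with h | h
  · have := (div_lt_iff₀ hx).1 (hX x h)
    exact le_max_of_le_left (by dsimp only; linarith)
  · have := hU.mono hx h
    have : 0 < x * y := by positivity
    exact le_max_of_le_right (by dsimp only; linarith)

/-- The Fenchel inequality. -/
lemma fenchel (hU : IsUtility U) {x y : ℝ} (hx : 0 < x) (hy : 0 < y) :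
    U x - x * y ≤ conj U y :=
  le_csSup (conj_bddAbove hU hy) ⟨x, hx, rfl⟩

lemma conj_antitoneOn (hU : IsUtility U) : AntitoneOn (conj U) (Set.Ioi 0) := by
  intro a ha b hb hab
  refine csSup_le ⟨_, 1, by simp, rfl⟩ ?_
  rintro _ ⟨x, hx, rfl⟩
  have hx : 0 < x := hx
  have := fenchel hU hx ha
  have := mul_le_mul_of_nonneg_left hab hx.le
  dsimp only
  linarith

/-- The Fenchel inequality for the extension of `U` to `[0,∞)`; at `0` it follows by letting
`x ↓ 0`. -/
lemma Uext_le (hU : IsUtility U) {x y : ℝ} (hx : 0 ≤ x) (hy : 0 < y) :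
    Uext U x ≤ ((conj U y + x * y : ℝ) : EReal) := by
  rcases hx.lt_or_eq with h | h
  · simp only [Uext, if_pos h, EReal.coe_le_coe_iff]
    linarith [fenchel hU h hy]
  · subst h
    simp only [Uext, lt_irrefl, if_false, if_true, zero_mul, add_zero]
    refine EReal.le_of_forall_lt_iff_le.1 fun z hz => ?_
    rw [EReal.coe_lt_coe_iff] at hz
    have hw : 0 < (z - conj U y) / y := div_pos (by linarith) hy
    refine (iInf_le _ ⟨(z - conj U y) / y, hw⟩).trans ?_
    rw [EReal.coe_le_coe_iff]
    have := fenchel hU hw hy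
    rw [div_mul_cancel₀ _ hy.ne'] at this
    dsimp only
    linarith

/-- `ε`-maximisers in the definition of `V(y)` can be found among the rationals: moving `x`
slightly to the right does not decrease `U(x)` and changes `x * y` little. -/
lemma exists_rat_near_max (hU : IsUtility U) {y ε : ℝ} (hy : 0 < y) (hε : 0 < ε) :
    ∃ q : {q : ℚ // 0 < q}, conj U y - ε ≤ U q.1 - q.1 * y := by
  obtain ⟨_, ⟨x, hx, rfl⟩, hlt⟩ := exists_lt_of_lt_csSup
    (s := (fun x => U x - x * y) '' Set.Ioi (0 : ℝ)) ⟨_, 1, by simp, rfl⟩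
    (sub_lt_self (conj U y) (half_pos hε))
  have hx : 0 < x := hx
  obtain ⟨q, hq1, hq2⟩ := exists_rat_btwn (show x < x + ε / 2 / y by
    have : 0 < ε / 2 / y := by positivity
    linarith)
  have hq0 : (0 : ℝ) < q := hx.trans hq1
  refine ⟨⟨q, by exact_mod_cast hq0⟩, ?_⟩
  have h1 := hU.mono hx hq1.le
  have h2 := mul_lt_mul_of_pos_right hq2 hy
  rw [add_mul, div_mul_cancel₀ _ hy.ne'] at h2
  dsimp only at hlt ⊢
  linarith

/-- Measurable selection of `ε`-maximisers, uniformly over a measurable random slope `Y > 0`. -/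
lemma exists_measurable_near_max {Ω : Type*} [MeasurableSpace Ω] (hU : IsUtility U)
    {Y : Ω → ℝ} (hYm : Measurable Y) (hY : ∀ ω, 0 < Y ω)
    (hVm : Measurable fun ω => conj U (Y ω)) {ε : ℝ} (hε : 0 < ε) :
    ∃ f : Ω → ℝ, Measurable f ∧ Measurable (fun ω => U (f ω)) ∧ (∀ ω, 0 < f ω) ∧
      ∀ ω, conj U (Y ω) - ε ≤ U (f ω) - f ω * Y ω := by
  classical
  have : Nonempty {q : ℚ // 0 < q} := ⟨⟨1, one_pos⟩⟩
  obtain ⟨e, he⟩ := exists_surjective_nat {q : ℚ // 0 < q}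
  have hex : ∀ ω, ∃ n, conj U (Y ω) - ε ≤ U (e n).1 - (e n).1 * Y ω := by
    intro ω
    obtain ⟨q, hq⟩ := exists_rat_near_max hU (hY ω) hε
    obtain ⟨n, rfl⟩ := he q
    exact ⟨n, hq⟩
  have hN : Measurable fun ω => Nat.find (hex ω) :=
    measurable_find hex fun n => measurableSet_le (hVm.sub_const _)
      ((hYm.const_mul _).const_sub _)
  refine ⟨fun ω => ((e (Nat.find (hex ω))).1 : ℝ), ?_, ?_, ?_, ?_⟩
  · exact (measurable_from_nat (f := fun n => ((e n).1 : ℝ))).comp hN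
  · exact (measurable_from_nat (f := fun n => U ((e n).1 : ℝ))).comp hN
  · intro ω
    exact Rat.cast_pos.2 (e (Nat.find (hex ω))).2
  · intro ω
    exact Nat.find_spec (hex ω)

/-- Measurability of `V(Y)` comes from the monotonicity of `V` on `(0,∞)`. -/
lemma measurable_conj_comp {Ω : Type*} [MeasurableSpace Ω] (hU : IsUtility U)
    {Y : Ω → ℝ} (hYm : Measurable Y) (hY : ∀ ω, 0 < Y ω) :
    Measurable fun ω => conj U (Y ω) := by
  have h : Antitone fun t : Set.Ioi (0 : ℝ) => conj U t := fun a b hab =>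
    conj_antitoneOn hU a.2 b.2 hab
  exact h.measurable.comp (hYm.subtype_mk (h := hY))

end Conjugate

/-! ### Conjugacy of the value functions -/

/-- The dual value function `v(y) := E[V(y Z)]` is the conjugate of the primal value
function: `v(y) = sup_{x>0} (u(x, U) − x y)` for every `y > 0`. -/
theorem dual_value_is_conjugate_of_value
    {Ω : Type*} [MeasurableSpace Ω] (μ : MeasureTheory.Measure Ω)
    [MeasureTheory.IsProbabilityMeasure μ]
    (Z : Ω → ℝ) (hZmeas : Measurable Z) (hZpos : ∀ ω, 0 < Z ω)
    (hZint : MeasureTheory.Integrable Z μ) (hZexp : ∫ ω, Z ω ∂μ = 1)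
    (U : ℝ → ℝ) (hU : IsUtility U)
    (hV : ∀ y : ℝ, 0 < y → eexp μ (fun ω => ((conj U (y * Z ω) : ℝ) : EReal)) < ⊤) :
    ∀ y : ℝ, 0 < y →
      eexp μ (fun ω => ((conj U (y * Z ω) : ℝ) : EReal)) =
        ⨆ x : {x : ℝ // 0 < x},
          (valueFn μ Z (Uext U) x.1 - (((x.1 * y) : ℝ) : EReal)) := by
  have hVint : ∀ y : ℝ, 0 < y → Integrable (fun ω => conj U (y * Z ω)) μ := by
    intro y hy
    have hpos : ∀ ω, 0 < y * Z ω := fun ω => mul_pos hy (hZpos ω)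
    -- The Fenchel inequality at the point `1` supplies an integrable minorant.
    refine integrable_of_eexp_lt_top (l := fun ω => U 1 - 1 * (y * Z ω))
      (measurable_conj_comp hU (hZmeas.const_mul y) hpos) ?_
      (fun ω => fenchel hU one_pos (hpos ω)) (hV y hy)
    exact (integrable_const _).sub ((hZint.const_mul y).const_mul 1)
  intro y hy
  have hpos : ∀ ω, 0 < y * Z ω := fun ω => mul_pos hy (hZpos ω)
  rw [eexp_coe (hVint y hy)]
  apply le_antisymm
  · refine EReal.ge_of_forall_gt_iff_ge.1 fun z hz => ?_
    rw [EReal.coe_lt_coe_iff] at hz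
    obtain ⟨f, hfm, hUfm, hf0, hf⟩ := exists_measurable_near_max hU (hZmeas.const_mul y) hpos
      (measurable_conj_comp hU (hZmeas.const_mul y) hpos) (sub_pos.2 hz)
    set ε := (∫ ω, conj U (y * Z ω) ∂μ) - z with hε
    have hZf0 : ∀ ω, 0 < Z ω * f ω := fun ω => mul_pos (hZpos ω) (hf0 ω)
    -- Comparing the slopes `yZ` and `yZ/2` bounds the cost `Zf` by an integrable function.
    have hZf : Integrable (fun ω => Z ω * f ω) μ := by
      refine Integrable.mono' (g := fun ω => (2 / y) *
        (conj U (y / 2 * Z ω) - conj U (y * Z ω) + ε)) ?_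
        (hZmeas.mul hfm).aestronglyMeasurable (Eventually.of_forall fun ω => ?_)
      · exact (((hVint _ (half_pos hy)).sub (hVint y hy)).add (integrable_const ε)).const_mul _
      · rw [Real.norm_of_nonneg (hZf0 ω).le]
        have h1 := fenchel hU (hf0 ω) (mul_pos (half_pos hy) (hZpos ω))
        have h2 := hf ω
        have h3 : y / 2 * (Z ω * f ω) ≤ conj U (y / 2 * Z ω) - conj U (y * Z ω) + ε := by
          have e1 : f ω * (y / 2 * Z ω) = y / 2 * (Z ω * f ω) := by ring
          have e2 : f ω * (y * Z ω) = 2 * (y / 2 * (Z ω * f ω)) := by ring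
          linarith
        calc Z ω * f ω = 2 / y * (y / 2 * (Z ω * f ω)) := by field_simp
          _ ≤ _ := mul_le_mul_of_nonneg_left h3 (by positivity)
    have hlow : Integrable (fun ω => conj U (y * Z ω) - ε + y * (Z ω * f ω)) μ :=
      ((hVint y hy).sub (integrable_const ε)).add (hZf.const_mul y)
    have hupp : Integrable (fun ω => conj U (y * Z ω) + y * (Z ω * f ω)) μ :=
      (hVint y hy).add (hZf.const_mul y)
    have hlowle : ∀ ω, conj U (y * Z ω) - ε + y * (Z ω * f ω) ≤ U (f ω) := fun ω => by
      have := hf ω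
      have e : f ω * (y * Z ω) = y * (Z ω * f ω) := by ring
      linarith
    have huppge : ∀ ω, U (f ω) ≤ conj U (y * Z ω) + y * (Z ω * f ω) := fun ω => by
      have := fenchel hU (hf0 ω) (hpos ω)
      have e : f ω * (y * Z ω) = y * (Z ω * f ω) := by ring
      linarith
    have hUf : Integrable (fun ω => U (f ω)) μ :=
      integrable_of_le_of_le hUfm.aestronglyMeasurable (Eventually.of_forall hlowle)
        (Eventually.of_forall huppge) hlow hupp
    have hx : 0 < ∫ ω, Z ω * f ω ∂μ := by
      rw [integral_pos_iff_support_of_nonneg (fun ω => (hZf0 ω).le) hZf]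
      have : Function.support (fun ω => Z ω * f ω) = Set.univ :=
        Set.eq_univ_of_forall fun ω => (hZf0 ω).ne'
      simp [this]
    have hfC : f ∈ Cset μ Z (∫ ω, Z ω * f ω ∂μ) :=
      ⟨hfm, fun ω => (hf0 ω).le, (ofReal_integral_eq_lintegral_ofReal hZf
        (Eventually.of_forall fun ω => (hZf0 ω).le)).ge⟩
    have hval : ((∫ ω, U (f ω) ∂μ : ℝ) : EReal)
        ≤ valueFn μ Z (Uext U) (∫ ω, Z ω * f ω ∂μ) := by
      have e : (fun ω => Uext U (f ω)) = fun ω => (U (f ω) : EReal) := by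
        funext ω
        simp [Uext, hf0 ω]
      rw [← eexp_coe hUf, ← e]
      exact le_iSup₂ (f := fun g (_ : g ∈ Cset μ Z (∫ ω, Z ω * f ω ∂μ)) =>
        eexp μ (fun ω => Uext U (g ω))) f hfC
    have hreal : z ≤ (∫ ω, U (f ω) ∂μ) - (∫ ω, Z ω * f ω ∂μ) * y := by
      have h1 := integral_mono hlow hUf hlowle
      have hVε : Integrable (fun ω => conj U (y * Z ω) - ε) μ :=
        (hVint y hy).sub (integrable_const ε)
      rw [integral_add hVε (hZf.const_mul y),
        integral_sub (hVint y hy) (integrable_const ε), integral_const_mul] at h1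
      simp only [integral_const, probReal_univ, smul_eq_mul, one_mul] at h1
      linarith
    refine le_trans ?_ (le_iSup (fun x : {x : ℝ // 0 < x} =>
      valueFn μ Z (Uext U) x.1 - (((x.1 * y) : ℝ) : EReal)) ⟨∫ ω, Z ω * f ω ∂μ, hx⟩)
    refine le_trans ?_ (EReal.sub_le_sub hval le_rfl)
    rw [← EReal.coe_sub, EReal.coe_le_coe_iff]
    exact hreal
  · refine iSup_le fun ⟨x, hx⟩ => ?_
    refine EReal.sub_le_of_le_add ?_
    refine iSup₂_le fun f hf => ?_
    obtain ⟨hfm, hf0, hfx⟩ := hf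
    have hZf0 : ∀ ω, 0 ≤ Z ω * f ω := fun ω => mul_nonneg (hZpos ω).le (hf0 ω)
    have hZf : Integrable (fun ω => Z ω * f ω) μ := by
      refine ⟨(hZmeas.mul hfm).aestronglyMeasurable, ?_⟩
      rw [hasFiniteIntegral_iff_ofReal (Eventually.of_forall hZf0)]
      exact hfx.trans_lt ENNReal.ofReal_lt_top
    have hcost : ∫ ω, Z ω * f ω ∂μ ≤ x := by
      rw [← ofReal_integral_eq_lintegral_ofReal hZf (Eventually.of_forall hZf0)] at hfx
      exact (ENNReal.ofReal_le_ofReal_iff hx.le).1 hfx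
    have hupp : Integrable (fun ω => conj U (y * Z ω) + y * (Z ω * f ω)) μ :=
      (hVint y hy).add (hZf.const_mul y)
    refine (eexp_le_of_le hupp fun ω => ?_).trans ?_
    · have e : f ω * (y * Z ω) = y * (Z ω * f ω) := by ring
      rw [← e]
      exact Uext_le hU (hf0 ω) (hpos ω)
    · rw [integral_add (hVint y hy) (hZf.const_mul y), integral_const_mul, ← EReal.coe_add,
        EReal.coe_le_coe_iff]
      have := mul_le_mul_of_nonneg_left hcost hy.le
      linarith
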